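/- arXiv:2406.12761 — 3 statements merged into one kernel-verified Lean document; each statement's English description precedes it below -/
import Mathlib

section
/- For all distinct positive integers n and m, and for all positive integers c and d, the polynomials n·X^(2c) − (2n+1)·X^c + n and m·X^(2d) − (2m+1)·X^d + m are coprime in ℚ[X] (i.e., they generate the unit ideal / have no common nonconstant factor). -/
open Polynomial

/-! Dividing `n t² - (2n + 1) t + n` by `n` gives `t² - (2 + 1/n) t + 1`, so a common root `z`
satisfies `z ^ c + z ^ (-c) = 2 + 1/n` and `z ^ d + z ^ (-d) = 2 + 1/m`. The Dickson polynomial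
`D k = dickson 1 1 k` has integer coefficients and satisfies `D k (t + t⁻¹) = t ^ k + t ^ (-k)`, so
`D d (2 + 1/n)` and `D c (2 + 1/m)` both equal `z ^ (c * d) + z ^ (-(c * d))`. Because `D k` is
monic of degree `k` for `k ≥ 1`, the reduced denominators of these two rationals are `n ^ d` and
`m ^ c`, whence `n ^ d = m ^ c`. If `m < n`, this forces `d ≤ c`. But for `k ≥ 1`, `D k x` is
strictly increasing in `x ≥ 2` and weakly increasing in `k`, so `D d (2 + 1/n) < D c (2 + 1/m)`,
a contradiction. -/

lemma isCoprime_eval_scaleRoots {R : Type*} [CommRing R] {p : R[X]} (hp : p.Monic) {a s : R}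
    (h : IsCoprime a s) : IsCoprime ((p.scaleRoots s).eval a) s := by
  have hdvd : s ∣ ∑ i ∈ Finset.range p.natDegree, (p.scaleRoots s).coeff i * a ^ i := by
    refine Finset.dvd_sum fun i hi ↦ Dvd.dvd.mul_right ?_ _
    rw [coeff_scaleRoots]
    exact (dvd_pow_self s (Nat.sub_ne_zero_of_lt (Finset.mem_range.mp hi))).mul_left _
  obtain ⟨b, hb⟩ := hdvd
  have heval : (p.scaleRoots s).eval a = a ^ p.natDegree + s * b := by
    rw [eval_eq_sum_range, natDegree_scaleRoots, Finset.sum_range_succ, hb,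
      coeff_scaleRoots_natDegree, hp.leadingCoeff, one_mul, add_comm]
  rw [heval]
  exact h.pow_left.add_mul_left_left b

lemma den_aeval_of_monic {p : ℤ[X]} (hp : p.Monic) (x : ℚ) :
    (aeval x p).den = x.den ^ p.natDegree := by
  have hden : (0 : ℤ) < x.den ^ p.natDegree := pow_pos (by exact_mod_cast x.den_pos) _
  have hscale : (((p.scaleRoots x.den).eval x.num : ℤ) : ℚ) =
      (x.den : ℚ) ^ p.natDegree * aeval x p := by
    simpa [Rat.den_mul_eq_num, eval₂_at_intCast, aeval_def] using
      scaleRoots_eval₂_mul (p := p) (Int.castRingHom ℚ) x (x.den : ℤ)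
  have hquot : aeval x p =
      ((p.scaleRoots x.den).eval x.num : ℤ) / ((x.den ^ p.natDegree : ℤ) : ℚ) := by
    rw [eq_div_iff (by exact_mod_cast hden.ne'), hscale, mul_comm]
    norm_cast
  have hcop : IsCoprime ((p.scaleRoots x.den).eval x.num) (x.den ^ p.natDegree : ℤ) :=
    (isCoprime_eval_scaleRoots hp (Rat.isCoprime_num_den x)).pow_right
  rw [hquot]
  exact_mod_cast Rat.den_div_eq_of_coprime hden (Int.isCoprime_iff_gcd_eq_one.mp hcop)

lemma map_eval_dickson {R S : Type*} [CommRing R] [CommRing S] (f : R →+* S) (k : ℕ) (a x : R)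
    (n : ℕ) : f ((dickson k a n).eval x) = (dickson k (f a) n).eval (f x) := by
  rw [← map_dickson, eval_map_apply]

lemma isMonicOfDegree_dickson {R : Type*} [CommRing R] [Nontrivial R] (k : ℕ) (a : R) :
    ∀ {n : ℕ}, n ≠ 0 → IsMonicOfDegree (dickson k a n) n
  | 1, _ => isMonicOfDegree_X R
  | 2, _ => by
    have hconst : C a * (3 - k : R[X]) = C (a * (3 - k)) := by simp [map_ofNat C 3]
    rw [dickson_two, hconst]
    exact (isMonicOfDegree_X_pow R 2).sub (by rw [natDegree_C]; exact two_pos)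
  | n + 3, _ => by
    have hsucc := isMonicOfDegree_dickson k a (n + 1).succ_ne_zero
    have hlow : (C a * dickson k a (n + 1)).natDegree < n + 3 := calc
      _ ≤ (dickson k a (n + 1)).natDegree := natDegree_C_mul_le _ _
      _ = n + 1 := (isMonicOfDegree_dickson k a n.succ_ne_zero).natDegree_eq
      _ < n + 3 := by omega
    rw [dickson_add_two]
    refine IsMonicOfDegree.sub ?_ hlow
    simpa only [add_comm 1] using (isMonicOfDegree_X R).mul hsucc

lemma den_eval_dickson (k : ℕ) (a : ℤ) (x : ℚ) {n : ℕ} (hn : n ≠ 0) :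
    ((dickson k (a : ℚ) n).eval x).den = x.den ^ n := by
  have hmonic := isMonicOfDegree_dickson k a hn
  have haeval : (dickson k (a : ℚ) n).eval x = aeval x (dickson k a n) := by
    rw [aeval_def, eval₂_eq_eval_map, map_dickson, algebraMap_int_eq, eq_intCast]
  rw [haeval, den_aeval_of_monic hmonic.monic, hmonic.natDegree_eq]

lemma eval_dickson_lt_eval_dickson {x y : ℝ} (hx : 2 ≤ x) (hxy : x < y) {j k : ℕ} (hjk : j ≤ k)
    (hk : k ≠ 0) : (dickson 1 1 j).eval x < (dickson 1 1 k).eval y := by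
  obtain ⟨θ, hθ : 0 ≤ θ, hcosh_θ⟩ := Real.cosh_surjOn (show 1 ≤ x / 2 by linarith)
  obtain ⟨φ, hφ : 0 ≤ φ, hcosh_φ⟩ := Real.cosh_surjOn (show 1 ≤ y / 2 by linarith)
  obtain rfl : x = 2 * Real.cosh θ := by linarith
  obtain rfl : y = 2 * Real.cosh φ := by linarith
  have hθφ : θ < φ := (Real.cosh_strictMonoOn.lt_iff_lt hθ hφ).mp (by linarith)
  have hmul : j * θ < k * φ := calc
    j * θ ≤ k * θ := by gcongr
    _ < k * φ := by gcongr
  have hcosh : Real.cosh (j * θ) < Real.cosh (k * φ) :=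
    Real.cosh_strictMonoOn (Set.mem_Ici.mpr (by positivity)) (Set.mem_Ici.mpr (by positivity)) hmul
  simpa [dickson_one_one_eq_chebyshev_C] using hcosh

lemma eval_dickson_ne_eval_dickson {x y : ℚ} (hx : 2 ≤ x) (hxy : x < y) (hden : y.den < x.den)
    {j k : ℕ} (hj : j ≠ 0) (hk : k ≠ 0) : (dickson 1 1 j).eval x ≠ (dickson 1 1 k).eval y := by
  intro heq
  have hden_eval (z : ℚ) {i : ℕ} (hi : i ≠ 0) : ((dickson 1 1 i).eval z).den = z.den ^ i := by
    simpa using den_eval_dickson 1 1 z hi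
  have hcast (z : ℚ) (i : ℕ) : ((dickson 1 1 i).eval z : ℚ) = (dickson 1 1 i).eval (z : ℝ) := by
    simpa using map_eval_dickson (Rat.castHom ℝ) 1 1 z i
  have hpow : x.den ^ j = y.den ^ k := by rw [← hden_eval x hj, heq, hden_eval y hk]
  have hjk : j ≤ k := by
    by_contra! hkj
    have hlt : y.den ^ k < x.den ^ j := calc
      y.den ^ k < x.den ^ k := Nat.pow_lt_pow_left hden hk
      _ ≤ x.den ^ j := Nat.pow_le_pow_right x.den_pos hkj.le
    exact hlt.ne' hpow
  have hlt : (dickson 1 1 j).eval (x : ℝ) < (dickson 1 1 k).eval (y : ℝ) :=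
    eval_dickson_lt_eval_dickson (by exact_mod_cast hx) (by exact_mod_cast hxy) hjk hk
  rw [← hcast, ← hcast, heq] at hlt
  exact hlt.false

lemma eval_dickson_eq_of_sq_sub_mul_add_one_eq_zero {K : Type*} [Field K] {x t : K}
    (h : t ^ 2 - x * t + 1 = 0) (k : ℕ) : (dickson 1 1 k).eval x = t ^ k + t⁻¹ ^ k := by
  have ht : t ≠ 0 := by rintro rfl; simp at h
  obtain rfl : x = t + t⁻¹ := by field_simp; linear_combination -h
  exact dickson_one_one_eval_add_inv t t⁻¹ (mul_inv_cancel₀ ht) k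

lemma isCoprime_of_eval_dickson_ne {K : Type*} [Field K] {x y : K} {c d : ℕ}
    (h : (dickson 1 1 d).eval x ≠ (dickson 1 1 c).eval y) :
    IsCoprime (X ^ (2 * c) - C x * X ^ c + 1) (X ^ (2 * d) - C y * X ^ d + 1) := by
  rw [isCoprime_iff_aeval_ne_zero_of_isAlgClosed K (AlgebraicClosure K)]
  intro z
  by_contra! hz
  let ι := algebraMap K (AlgebraicClosure K)
  have hx : (z ^ c) ^ 2 - ι x * z ^ c + 1 = 0 := by simpa [pow_mul'] using hz.1
  have hy : (z ^ d) ^ 2 - ι y * z ^ d + 1 = 0 := by simpa [pow_mul'] using hz.2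
  refine h (ι.injective ?_)
  calc ι ((dickson 1 1 d).eval x)
    _ = (z ^ c) ^ d + (z ^ c)⁻¹ ^ d := by
      rw [map_eval_dickson, map_one, eval_dickson_eq_of_sq_sub_mul_add_one_eq_zero hx]
    _ = (z ^ d) ^ c + (z ^ d)⁻¹ ^ c := by ring
    _ = ι ((dickson 1 1 c).eval y) := by
      rw [map_eval_dickson, map_one, eval_dickson_eq_of_sq_sub_mul_add_one_eq_zero hy]

lemma twist_knot_alexander_eq_C_mul {K : Type*} [Field K] {a : K} (ha : a ≠ 0) (c : ℕ) :
    C a * X ^ (2 * c) - C (2 * a + 1) * X ^ c + C a =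
      C a * (X ^ (2 * c) - C (2 + a⁻¹) * X ^ c + 1) := by
  have hcoeff : 2 * a + 1 = a * (2 + a⁻¹) := by field_simp
  rw [hcoeff, C_mul]
  ring

/-- For all distinct positive integers `n` and `m`, and all positive integers `c` and `d`,
the polynomials `n·X^(2c) − (2n+1)·X^c + n` and `m·X^(2d) − (2m+1)·X^d + m` are coprime
in `ℚ[X]`. -/
theorem twist_knot_alexander_strongly_coprime
    (n m c d : ℕ) (hn : 0 < n) (hm : 0 < m) (hnm : n ≠ m) (hc : 0 < c) (hd : 0 < d) :
    IsCoprime (C (n : ℚ) * X ^ (2 * c) - C (2 * n + 1 : ℚ) * X ^ c + C (n : ℚ))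
      (C (m : ℚ) * X ^ (2 * d) - C (2 * m + 1 : ℚ) * X ^ d + C (m : ℚ)) := by
  wlog hmn : m < n generalizing n m c d
  · exact (this m n d c hm hn hnm.symm hd hc (by omega)).symm
  have hn₀ : (n : ℚ) ≠ 0 := by positivity
  have hm₀ : (m : ℚ) ≠ 0 := by positivity
  rw [twist_knot_alexander_eq_C_mul hn₀, twist_knot_alexander_eq_C_mul hm₀,
    isCoprime_mul_units_left (isUnit_C.mpr hn₀.isUnit) (isUnit_C.mpr hm₀.isUnit)]
  have hlt : 2 + (n : ℚ)⁻¹ < 2 + (m : ℚ)⁻¹ := by gcongr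
  have hden : (2 + (m : ℚ)⁻¹).den < (2 + (n : ℚ)⁻¹).den := by
    simpa [hn.ne', hm.ne'] using hmn
  exact isCoprime_of_eval_dickson_ne <|
    eval_dickson_ne_eval_dickson (by simp) hlt hden hd.ne' hc.ne'
end

section
/- Let n be a positive integer such that there is no integer m with n = m·(m−1) and there are no integers m, k with k ≥ 2 and n = m^k. Then for every positive integer c the polynomial n·X^(2c) − (2n+1)·X^c + n is irreducible in ℚ[X]. -/
open Polynomial

/-!
Divided by `n`, the polynomial is `f(X ^ c)` with `f = X² - (2 + 1/n) X + 1`. The discriminant of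
`f` is a square only if `n = m (m - 1)`, and the roots `α`, `α⁻¹` of `f` are positive reals. Over an
ordered field `X ^ c - α` is irreducible unless the positive element `α` is a `p`-th power for some
prime `p ∣ c`, so it remains to exclude `α = β ^ p` with `β ∈ ℚ(α)`. We may take `β > 0`, and the
norm of `β` is `±1`.

* If it is `-1`, then `p = 2` and the trace `a` of `β` satisfies `a² + 2 = 2 + 1/n`, so `n` is a
  square.
* If it is `1`, then `a = β + β⁻¹` lies strictly between `2` and `β ^ p + β⁻¹ ^ p = 2 + 1/n`. But
  `n β` and `n β⁻¹` are algebraic integers because `n α` and `n α⁻¹` are, so the rational number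
  `n a` is an integer strictly between `2 n` and `2 n + 1`.
-/

section Kummer

open IntermediateField

variable {K F L : Type*} [Field K] [Field F] [Field L] [LinearOrder L] [IsStrictOrderedRing L]

lemma exists_pos_pow_eq_pow (φ : F →+* L) {b : F} {k : ℕ} (hk : k ≠ 0) (h : 0 < φ (b ^ k)) :
    ∃ b' : F, 0 < φ b' ∧ b' ^ k = b ^ k := by
  rw [map_pow] at h
  rcases lt_trichotomy (φ b) 0 with hneg | hzero | hpos
  · have hkeven : Even k := Nat.not_odd_iff_even.1 fun hodd ↦ h.not_gt (hodd.pow_neg hneg)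
    exact ⟨-b, by simpa using hneg, hkeven.neg_pow b⟩
  · simp [hzero, hk] at h
  · exact ⟨b, hpos, rfl⟩

lemma exists_pow_eq_pow_natDegree_of_dvd_X_pow_sub_C {a : F} {n : ℕ} {g : F[X]}
    (hg : Irreducible g) (hdvd : g ∣ X ^ n - C a) : ∃ z : F, z ^ n = a ^ g.natDegree := by
  refine ⟨Algebra.norm F (AdjoinRoot.root g), ?_⟩
  have hroot : AdjoinRoot.root g ^ n = algebraMap F (AdjoinRoot g) a := by
    have := eval₂_eq_zero_of_dvd_of_eval₂_eq_zero _ _ hdvd (AdjoinRoot.eval₂_root g)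
    rwa [eval₂_sub, eval₂_X_pow, eval₂_C, sub_eq_zero] at this
  rw [← map_pow, hroot, Algebra.norm_algebraMap, (AdjoinRoot.powerBasis hg.ne_zero).finrank,
    AdjoinRoot.powerBasis_dim]

theorem X_pow_sub_C_irreducible_of_map_pos (φ : F →+* L) {a : F} (ha : 0 < φ a) {n : ℕ}
    (hn : n ≠ 0) (h : ∀ p : ℕ, p.Prime → p ∣ n → ∀ b : F, b ^ p ≠ a) :
    Irreducible (X ^ n - C a) := by
  have hne : X ^ n - C a ≠ 0 := X_pow_sub_C_ne_zero hn.bot_lt a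
  have hunit : ¬ IsUnit (X ^ n - C a) := by
    rwa [isUnit_iff_degree_eq_zero, degree_X_pow_sub_C hn.bot_lt, Nat.cast_eq_zero]
  obtain ⟨g, hg, hdvd⟩ := WfDvdMonoid.exists_irreducible_factor hunit hne
  suffices hle : n ≤ g.natDegree from
    (associated_of_dvd_of_natDegree_le hdvd hne (natDegree_X_pow_sub_C.trans_le hle)).irreducible hg
  obtain ⟨w, hw⟩ := exists_pow_eq_pow_natDegree_of_dvd_X_pow_sub_C hg hdvd
  obtain ⟨z, hz, hzw⟩ := exists_pos_pow_eq_pow φ hn (b := w) (by rw [hw, map_pow]; positivity)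
  obtain ⟨e, n', d', he, hcop, rfl, hd⟩ := Nat.exists_coprime' (n := g.natDegree)
    (Nat.gcd_pos_of_pos_left _ hn.bot_lt)
  -- Positivity allows cancelling `e` from the exponents in `z ^ (n' * e) = a ^ (d' * e)`.
  have hpow : z ^ n' = a ^ d' := by
    have hφ : (φ z ^ n') ^ e = (φ a ^ d') ^ e := by
      rw [← pow_mul, ← pow_mul, ← map_pow, ← map_pow, hzw, hw, hd]
    apply φ.injective
    simpa only [map_pow] using (pow_left_inj₀ (by positivity) (by positivity) he.ne').1 hφ
  obtain rfl : n' = 1 := by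
    by_contra hn'
    obtain ⟨p, hp, k, rfl⟩ := Nat.exists_prime_and_dvd hn'
    have hcop' : d'.Coprime p := hcop.symm.coprime_dvd_right (dvd_mul_right p k)
    obtain ⟨b, hb⟩ :=
      (pow_mem_range_pow_of_coprime hcop' a).1 ⟨z ^ k, (pow_mul' z p k).symm.trans hpow⟩
    exact h p hp ((dvd_mul_right p k).mul_right e) b hb
  rw [one_mul]
  exact Nat.le_of_dvd hg.natDegree_pos (hd ▸ dvd_mul_left e d')

theorem irreducible_comp_X_pow_of_pos_root [Algebra K L] {f : K[X]} (hfm : f.Monic)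
    (hf : Irreducible f) {α : L} (hα : 0 < α) (hroot : aeval α f = 0) {c : ℕ} (hc : c ≠ 0)
    (h : ∀ p : ℕ, p.Prime → p ∣ c → ∀ b : K⟮α⟯, b ^ p ≠ AdjoinSimple.gen K α) :
    Irreducible (f.comp (X ^ c)) := by
  refine irreducible_comp hfm (monic_X_pow c) hf fun E _ _ x hx ↦ ?_
  have hαint : IsIntegral K α := ⟨f, hfm, hroot⟩
  have hxint : IsIntegral K x := minpoly.ne_zero_iff.1 (hx ▸ hf.ne_zero)
  have hmin : minpoly K (adjoin.powerBasis hxint).gen =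
      minpoly K (adjoin.powerBasis hαint).gen := by
    rw [adjoin.powerBasis_gen, adjoin.powerBasis_gen, minpoly_gen, minpoly_gen, hx]
    exact minpoly.eq_of_irreducible_of_monic hf hroot hfm
  let e : K⟮x⟯ ≃ₐ[K] K⟮α⟯ := (adjoin.powerBasis hxint).equivOfMinpoly _ hmin
  have he : e (AdjoinSimple.gen K x) = AdjoinSimple.gen K α := by
    simpa only [adjoin.powerBasis_gen] using
      (adjoin.powerBasis hxint).equivOfMinpoly_gen (adjoin.powerBasis hαint) hmin
  rw [Polynomial.map_pow, map_X]
  refine X_pow_sub_C_irreducible_of_map_pos ((algebraMap K⟮α⟯ L).comp (e : K⟮x⟯ →+* K⟮α⟯))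
    ?_ hc fun p hp hpc b hb ↦ ?_
  · simpa [he] using hα
  · exact h p hp hpc (e b) (by rw [← map_pow, hb, he])

end Kummer

section Integrality

variable {R A : Type*} [CommRing R] [CommRing A] [Algebra R A] {r s : R} {x y : A}

lemma isIntegral_smul_of_mul_eq_one (hxy : x * y = 1) (h : r • (x + y) = algebraMap R A s) :
    IsIntegral R (r • x) := by
  refine ⟨X ^ 2 - C s * X + C (r ^ 2), by monicity!, ?_⟩
  rw [Algebra.smul_def] at h ⊢
  simp only [eval₂_add, eval₂_sub, eval₂_mul, eval₂_pow, eval₂_X, eval₂_C, ← h, map_pow]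
  linear_combination -(algebraMap R A r) ^ 2 * hxy

lemma isIntegral_smul_of_smul_pow {k : ℕ} (hk : k ≠ 0) (h : IsIntegral R (r • x ^ k)) :
    IsIntegral R (r • x) := by
  obtain ⟨j, rfl⟩ := Nat.exists_eq_succ_of_ne_zero hk
  refine .of_pow j.succ_pos ?_
  rw [_root_.smul_pow, pow_succ r, mul_smul]
  exact h.smul _

lemma isIntegral_smul_add_of_mul_eq_one {k : ℕ} (hk : k ≠ 0) (hxy : x * y = 1)
    (h : r • (x ^ k + y ^ k) = algebraMap R A s) : IsIntegral R (r • (x + y)) := by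
  have hpow : x ^ k * y ^ k = 1 := by rw [← mul_pow, hxy, one_pow]
  have hx : IsIntegral R (r • x ^ k) := isIntegral_smul_of_mul_eq_one hpow h
  have hy : IsIntegral R (r • y ^ k) :=
    isIntegral_smul_of_mul_eq_one (s := s) (by rwa [mul_comm]) (by rwa [add_comm])
  rw [smul_add]
  exact (isIntegral_smul_of_smul_pow hk hx).add (isIntegral_smul_of_smul_pow hk hy)

lemma exists_intCast_eq_mul_of_add_inv {L : Type*} [Field L] [CharZero L] {y : L} (hy : y ≠ 0)
    {a : ℚ} (ha : y + y⁻¹ = a) {k : ℕ} (hk : k ≠ 0) {n s : ℤ}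
    (h : n * (y ^ k + (y ^ k)⁻¹) = s) : ∃ m : ℤ, (m : ℚ) = n * a := by
  refine IsIntegrallyClosed.isIntegral_iff.1 ?_
  rw [← isIntegral_algebraMap_iff (B := L) (algebraMap ℚ L).injective]
  have hint : IsIntegral ℤ (n • (y + y⁻¹)) :=
    isIntegral_smul_add_of_mul_eq_one hk (mul_inv_cancel₀ hy) (s := s) (by simpa [mul_add] using h)
  simpa [ha] using hint

end Integrality

section AddInv

variable {L : Type*} [Field L] [LinearOrder L] [IsStrictOrderedRing L]

lemma strictMonoOn_add_inv : StrictMonoOn (fun t : L ↦ t + t⁻¹) (Set.Ici 1) := by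
  intro s (hs : 1 ≤ s) t _ hst
  have hs₀ : 0 < s := one_pos.trans_le hs
  have ht₀ : 0 < t := hs₀.trans hst
  have hst₁ : 1 < s * t := one_lt_mul_of_le_of_lt hs (hs.trans_lt hst)
  have hdiff : t + t⁻¹ - (s + s⁻¹) = (t - s) * (s * t - 1) / (s * t) := by
    field_simp
    ring
  have hpos : 0 < (t - s) * (s * t - 1) / (s * t) :=
    div_pos (mul_pos (sub_pos.2 hst) (sub_pos.2 hst₁)) (mul_pos hs₀ ht₀)
  exact sub_pos.1 (hdiff ▸ hpos)

lemma pow_add_inv_ne_two_add_inv {y : L} (hy : 0 < y) {a : ℚ} (ha : y + y⁻¹ = a) {k : ℕ}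
    (hk : 1 < k) {n : ℕ} (hn : n ≠ 0) : y ^ k + (y ^ k)⁻¹ ≠ 2 + (n : L)⁻¹ := by
  intro h
  have hn₀ : (0 : L) < n := by positivity
  wlog hy₁ : 1 < y generalizing y
  · rcases (not_lt.1 hy₁).lt_or_eq with hlt | rfl
    · refine this (inv_pos.2 hy) ?_ ?_ ((one_lt_inv₀ hy).2 hlt)
      · rw [inv_inv, add_comm, ha]
      · rw [inv_pow, inv_inv, add_comm, h]
    · norm_num at h
      exact hn h
  obtain ⟨m, hm⟩ := exists_intCast_eq_mul_of_add_inv hy.ne' ha (Nat.ne_zero_of_lt hk)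
    (n := n) (s := 2 * n + 1) (by rw [h]; push_cast; field_simp)
  have hmL : (m : L) = n * (y + y⁻¹) := by
    rw [ha]
    exact_mod_cast congrArg (Rat.cast (K := L)) hm
  have hlower : 2 < y + y⁻¹ := by
    simpa [one_add_one_eq_two] using strictMonoOn_add_inv Set.self_mem_Ici hy₁.le hy₁
  have hupper : y + y⁻¹ < 2 + (n : L)⁻¹ :=
    h ▸ strictMonoOn_add_inv hy₁.le (one_le_pow₀ hy₁.le) (lt_self_pow₀ hy₁ hk)
  have hm_gt : (n : L) * 2 < m := hmL ▸ mul_lt_mul_of_pos_left hlower hn₀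
  have hm_lt : (m : L) < n * 2 + 1 := calc
    (m : L) = n * (y + y⁻¹) := hmL
    _ < n * (2 + (n : L)⁻¹) := mul_lt_mul_of_pos_left hupper hn₀
    _ = n * 2 + 1 := by field_simp
  norm_cast at hm_gt hm_lt
  lia

end AddInv

section QuadraticExtension

variable {K F L : Type*} [Field K] [Field F] [Algebra K F] [Algebra.IsQuadraticExtension K F]

lemma sq_eq_trace_mul_sub_norm (b : F) :
    b ^ 2 = algebraMap K F (Algebra.trace K F b) * b - algebraMap K F (Algebra.norm K b) := by
  let B := Module.finBasisOfFinrankEq K F (Algebra.IsQuadraticExtension.finrank_eq_two K F)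
  apply Algebra.leftMulMatrix_injective B
  have hcayley := Matrix.aeval_self_charpoly (Algebra.leftMulMatrix B b)
  rw [Matrix.charpoly_fin_two, ← Algebra.trace_eq_matrix_trace, ← Algebra.norm_eq_matrix_det]
    at hcayley
  simp only [map_add, map_sub, map_mul, map_pow, aeval_X, aeval_C, AlgHom.commutes] at hcayley ⊢
  rw [← sub_eq_zero, ← hcayley]
  abel

lemma add_inv_eq_algebraMap_trace {b : F} (hb : Algebra.norm K b = 1) :
    b + b⁻¹ = algebraMap K F (Algebra.trace K F b) := by
  have hb₀ : b ≠ 0 := by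
    rintro rfl
    simp [Algebra.norm_zero] at hb
  have hsq := sq_eq_trace_mul_sub_norm (K := K) b
  rw [hb, map_one] at hsq
  field_simp
  linear_combination hsq

lemma trace_sq (b : F) :
    Algebra.trace K F (b ^ 2) = Algebra.trace K F b ^ 2 - 2 * Algebra.norm K b := by
  rw [sq_eq_trace_mul_sub_norm (K := K) b, map_sub, ← Algebra.smul_def, map_smul,
    Algebra.trace_algebraMap, Algebra.IsQuadraticExtension.finrank_eq_two K F, smul_eq_mul,
    nsmul_eq_mul, Nat.cast_ofNat, sq]

variable [Algebra ℚ F] [Algebra.IsQuadraticExtension ℚ F]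
  [Field L] [LinearOrder L] [IsStrictOrderedRing L]

theorem isSquare_of_trace_prime_pow_eq (φ : F →+* L) {n : ℕ} (hn : n ≠ 0) {b : F} {p : ℕ}
    (hp : p.Prime) (hpos : 0 < φ (b ^ p)) (hnorm : Algebra.norm ℚ (b ^ p) = 1)
    (htrace : Algebra.trace ℚ F (b ^ p) = 2 + (n : ℚ)⁻¹) : IsSquare n := by
  obtain ⟨β, hβ, hβp⟩ := exists_pos_pow_eq_pow φ hp.ne_zero hpos
  rw [← hβp] at hnorm htrace
  have hβnorm : Algebra.norm ℚ β ^ p = 1 := by rw [← map_pow, hnorm]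
  rcases pow_eq_one_iff_cases.1 hβnorm with hzero | hone | ⟨hneg, heven⟩
  · exact absurd hzero hp.ne_zero
  · have map_add_inv {x : F} (hx : Algebra.norm ℚ x = 1) :
        φ x + (φ x)⁻¹ = (Algebra.trace ℚ F x : ℚ) := by
      simpa using congrArg φ (add_inv_eq_algebraMap_trace hx)
    refine absurd ?_ (pow_add_inv_ne_two_add_inv hβ (map_add_inv hone) hp.one_lt hn)
    rw [← map_pow, map_add_inv hnorm, htrace]
    simp
  · obtain rfl : p = 2 := hp.even_iff.1 heven
    rw [trace_sq, hneg] at htrace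
    rw [← Rat.isSquare_natCast_iff, ← isSquare_inv]
    exact ⟨Algebra.trace ℚ F β, by linear_combination -htrace⟩

end QuadraticExtension

section ReciprocalQuadratic

open IntermediateField

variable {K : Type*} [Field K]

/-- The monic reciprocal quadratic `X² - s X + 1`, whose roots are `x` and `x⁻¹` with
`x + x⁻¹ = s`. The Alexander polynomial of the `n`-twist knot is `n` times the one with
`s = 2 + 1/n`. -/
noncomputable def reciprocalQuadratic (s : K) : K[X] := X ^ 2 - C s * X + 1

lemma natDegree_reciprocalQuadratic (s : K) : (reciprocalQuadratic s).natDegree = 2 := by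
  unfold reciprocalQuadratic
  compute_degree!

lemma monic_reciprocalQuadratic (s : K) : (reciprocalQuadratic s).Monic := by
  unfold reciprocalQuadratic
  monicity!

lemma irreducible_reciprocalQuadratic {s : K} (hs : ¬ IsSquare (s ^ 2 - 4)) :
    Irreducible (reciprocalQuadratic s) := by
  have hdeg := natDegree_reciprocalQuadratic s
  rw [(monic_reciprocalQuadratic s).irreducible_iff_roots_eq_zero_of_degree_le_three hdeg.ge
    (by lia), Multiset.eq_zero_iff_forall_notMem]
  intro x hx
  have hroot : x ^ 2 - s * x + 1 = 0 := by
    simpa [reciprocalQuadratic] using isRoot_of_mem_roots hx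
  exact hs ⟨2 * x - s, by linear_combination -4 * hroot⟩

lemma exists_pos_aeval_reciprocalQuadratic_eq_zero {s : ℚ} (hs : 2 ≤ s) :
    ∃ α : ℝ, 0 < α ∧ aeval α (reciprocalQuadratic s) = 0 := by
  have hsℝ : (2 : ℝ) ≤ s := by exact_mod_cast hs
  have hsqrt : √((s : ℝ) ^ 2 - 4) ^ 2 = s ^ 2 - 4 := Real.sq_sqrt (by nlinarith)
  refine ⟨(s + √(s ^ 2 - 4)) / 2, by positivity, ?_⟩
  simp only [reciprocalQuadratic, map_add, map_sub, map_mul, map_pow, aeval_X, aeval_C, map_one,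
    eq_ratCast]
  linear_combination hsqrt / 4

variable {L : Type*} [Field L] [Algebra K L] {s : K} {α : L}

lemma minpoly_eq_reciprocalQuadratic (hs : Irreducible (reciprocalQuadratic s))
    (hα : aeval α (reciprocalQuadratic s) = 0) : minpoly K α = reciprocalQuadratic s :=
  (minpoly.eq_of_irreducible_of_monic hs hα (monic_reciprocalQuadratic s)).symm

lemma isQuadraticExtension_adjoin (hs : Irreducible (reciprocalQuadratic s))
    (hα : aeval α (reciprocalQuadratic s) = 0) : Algebra.IsQuadraticExtension K K⟮α⟯ where
  finrank_eq_two' := by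
    rw [adjoin.finrank ⟨_, monic_reciprocalQuadratic s, hα⟩, minpoly_eq_reciprocalQuadratic hs hα,
      natDegree_reciprocalQuadratic]

lemma norm_gen_eq_one (hs : Irreducible (reciprocalQuadratic s))
    (hα : aeval α (reciprocalQuadratic s) = 0) :
    Algebra.norm K (AdjoinSimple.gen K α) = 1 := by
  have hint : IsIntegral K α := ⟨_, monic_reciprocalQuadratic s, hα⟩
  rw [← adjoin.powerBasis_gen hint, Algebra.PowerBasis.norm_gen_eq_coeff_zero_minpoly,
    adjoin.powerBasis_gen, adjoin.powerBasis_dim, minpoly_gen, minpoly_eq_reciprocalQuadratic hs hα,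
    natDegree_reciprocalQuadratic]
  simp [reciprocalQuadratic]

lemma trace_gen_eq (hs : Irreducible (reciprocalQuadratic s))
    (hα : aeval α (reciprocalQuadratic s) = 0) :
    Algebra.trace K K⟮α⟯ (AdjoinSimple.gen K α) = s := by
  have hint : IsIntegral K α := ⟨_, monic_reciprocalQuadratic s, hα⟩
  rw [← adjoin.powerBasis_gen hint, PowerBasis.trace_gen_eq_nextCoeff_minpoly,
    adjoin.powerBasis_gen, minpoly_gen, minpoly_eq_reciprocalQuadratic hs hα,
    nextCoeff_of_natDegree_pos (by simp [natDegree_reciprocalQuadratic]),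
    natDegree_reciprocalQuadratic]
  simp [reciprocalQuadratic, coeff_one]

end ReciprocalQuadratic

section TwistKnot

open IntermediateField

variable {n : ℕ}

lemma not_isSquare_two_add_inv_sq_sub_four (hn : n ≠ 0) (h : ∀ m : ℤ, (n : ℤ) ≠ m * (m - 1)) :
    ¬ IsSquare ((2 + (n : ℚ)⁻¹) ^ 2 - 4) := by
  rintro ⟨q, hq⟩
  have hdisc : IsSquare ((4 * n + 1 : ℤ) : ℚ) := by
    refine ⟨n * q, ?_⟩
    field_simp at hq
    push_cast
    linear_combination hq
  obtain ⟨r, hr⟩ := Rat.isSquare_intCast_iff.1 hdisc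
  rcases Int.even_or_odd' r with ⟨m, rfl | rfl⟩
  · have : 4 * (m * m - n) = 1 := by linear_combination -hr
    lia
  · exact h (m + 1) (by linarith)

theorem irreducible_reciprocalQuadratic_comp_X_pow (hn : n ≠ 0)
    (hirr : Irreducible (reciprocalQuadratic (2 + (n : ℚ)⁻¹))) (hsq : ¬ IsSquare n) {c : ℕ}
    (hc : c ≠ 0) : Irreducible ((reciprocalQuadratic (2 + (n : ℚ)⁻¹)).comp (X ^ c)) := by
  have htwo_le : 2 ≤ 2 + (n : ℚ)⁻¹ := le_add_of_nonneg_right (by positivity)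
  obtain ⟨α, hα, hroot⟩ := exists_pos_aeval_reciprocalQuadratic_eq_zero htwo_le
  have : Algebra.IsQuadraticExtension ℚ ℚ⟮α⟯ := isQuadraticExtension_adjoin hirr hroot
  refine irreducible_comp_X_pow_of_pos_root (monic_reciprocalQuadratic _) hirr hα hroot hc
    fun p hp _ b hb ↦ hsq ?_
  apply isSquare_of_trace_prime_pow_eq (algebraMap _ ℝ) hn hp (b := b)
  · rwa [hb]
  · exact hb ▸ norm_gen_eq_one hirr hroot
  · exact hb ▸ trace_gen_eq hirr hroot

lemma twist_polynomial_eq_C_mul_comp (hn : n ≠ 0) (c : ℕ) :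
    C (n : ℚ) * X ^ (2 * c) - C (2 * n + 1 : ℚ) * X ^ c + C (n : ℚ) =
      C (n : ℚ) * (reciprocalQuadratic (2 + (n : ℚ)⁻¹)).comp (X ^ c) := by
  have hcoeff : C (2 * n + 1 : ℚ) = C (n : ℚ) * C (2 + (n : ℚ)⁻¹) := by
    rw [← C_mul]
    congr 1
    field_simp
  simp only [hcoeff, reciprocalQuadratic, sub_comp, add_comp, mul_comp, pow_comp, X_comp, C_comp,
    one_comp]
  ring

end TwistKnot

theorem twist_knot_alexander_strongly_irreducible_general
    (n : ℕ) (hn : 0 < n)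
    (h1 : ∀ m : ℤ, (n : ℤ) ≠ m * (m - 1))
    (h2 : ¬ IsSquare n) :
    ∀ c : ℕ, 0 < c →
      Irreducible (C (n : ℚ) * X ^ (2 * c) - C (2 * n + 1 : ℚ) * X ^ c + C (n : ℚ)) := by
  intro c hc
  have hunit : IsUnit (C (n : ℚ)) := isUnit_C.2 (Nat.cast_ne_zero.2 hn.ne').isUnit
  have hirr : Irreducible (reciprocalQuadratic (2 + (n : ℚ)⁻¹)) :=
    irreducible_reciprocalQuadratic (not_isSquare_two_add_inv_sq_sub_four hn.ne' h1)
  rw [twist_polynomial_eq_C_mul_comp hn.ne', irreducible_isUnit_mul hunit]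
  exact irreducible_reciprocalQuadratic_comp_X_pow hn.ne' hirr h2 hc.ne'

/-- If `n` is a positive integer which is neither of the form `m·(m−1)` nor a perfect power
`m^k` with `k ≥ 2`, then for every positive integer `c` the polynomial
`n·X^(2c) − (2n+1)·X^c + n` is irreducible in `ℚ[X]`. -/
theorem twist_knot_alexander_strongly_irreducible
    (n : ℕ) (hn : 0 < n)
    (h1 : ∀ m : ℤ, (n : ℤ) ≠ m * (m - 1))
    (h2 : ∀ (m : ℤ) (k : ℕ), 2 ≤ k → (n : ℤ) ≠ m ^ k) :
    ∀ c : ℕ, 0 < c →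
      Irreducible (C (n : ℚ) * X ^ (2 * c) - C (2 * n + 1 : ℚ) * X ^ c + C (n : ℚ)) :=
  twist_knot_alexander_strongly_irreducible_general n hn h1 fun ⟨m, hm⟩ ↦
    h2 m 2 le_rfl (by rw [hm]; push_cast; ring)
end

section
/- There are infinitely many positive integers n with the following three properties: (i) there exist positive integers a, b with n = a² − a + b²; (ii) there is no integer m with n = m² − m; (iii) there are no natural numbers m, k with k ≥ 2 and n = m^k. In fact, n = 36k² − 6k + 4 has all three properties for every odd positive integer k. -/
/-!
With `a = 6k` and `b = 2` one has `a² − a + b² = 36k² − 6k + 4`, which is `10` modulo `12` when `k`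
is odd. Modulo `3` this is `1`, a value that `m² − m` never takes; modulo `4` it is `2`, so the
prime `2` divides it exactly once and it cannot be a perfect power.
-/

/-- The arithmetic conditions on `n` under which the `n`-twist knot has order two in the algebraic
concordance group (by Levine) and strongly irreducible Alexander polynomial (by Bullock–Davis).
The truncated subtraction `a ^ 2 - a` agrees with the integer one since `a ≤ a ^ 2`. -/
def IsOrderTwoTwistKnotParameter (n : ℕ) : Prop :=
  0 < n ∧
    (∃ a b : ℕ, 0 < a ∧ 0 < b ∧ n = a ^ 2 - a + b ^ 2) ∧
    (∀ m : ℤ, (n : ℤ) ≠ m ^ 2 - m) ∧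
    (∀ m j : ℕ, 2 ≤ j → n ≠ m ^ j)

theorem sq_sub_self_emod_three_ne_one (m : ℤ) : (m ^ 2 - m) % 3 ≠ 1 := by
  obtain h | h | h : m % 3 = 0 ∨ m % 3 = 1 ∨ m % 3 = 2 := by omega
  all_goals simp [pow_two, Int.sub_emod, Int.mul_emod, h]

theorem ne_pow_of_prime_dvd_of_not_sq_dvd {M : Type*} [CommMonoidWithZero M] {p n : M}
    (hp : Prime p) (hdvd : p ∣ n) (hsq : ¬p ^ 2 ∣ n) (m : M) {j : ℕ} (hj : 2 ≤ j) :
    n ≠ m ^ j := by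
  rintro rfl
  have hpm : p ∣ m := hp.dvd_of_dvd_pow hdvd
  exact hsq ((pow_dvd_pow p hj).trans (pow_dvd_pow_of_dvd hpm j))

theorem isOrderTwoTwistKnotParameter_of_mod_twelve_eq_ten {a b : ℕ} (ha : 0 < a) (hb : 0 < b)
    (hmod : (a ^ 2 - a + b ^ 2) % 12 = 10) :
    IsOrderTwoTwistKnotParameter (a ^ 2 - a + b ^ 2) := by
  refine ⟨by positivity, ⟨a, b, ha, hb, rfl⟩, fun m hm => ?_, fun m j hj => ?_⟩
  · have hmod_three : (m ^ 2 - m) % 3 = 1 := by rw [← hm]; omega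
    exact sq_sub_self_emod_three_ne_one m hmod_three
  · exact ne_pow_of_prime_dvd_of_not_sq_dvd Nat.prime_two.prime (by omega) (by omega) m hj

theorem isOrderTwoTwistKnotParameter_of_odd {k : ℕ} (hk : Odd k) :
    IsOrderTwoTwistKnotParameter (36 * k ^ 2 - 6 * k + 4) := by
  have hrep : 36 * k ^ 2 - 6 * k + 4 = (6 * k) ^ 2 - 6 * k + 2 ^ 2 := by rw [mul_pow]; norm_num
  have hmod : (36 * k ^ 2 - 6 * k + 4) % 12 = 10 := by
    have hodd : k % 2 = 1 := Nat.odd_iff.mp hk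
    have hle : k ≤ k ^ 2 := Nat.le_self_pow two_ne_zero k
    omega
  rw [hrep] at hmod ⊢
  exact isOrderTwoTwistKnotParameter_of_mod_twelve_eq_ten (mul_pos (by norm_num) hk.pos)
    two_pos hmod

theorem lt_thirtySix_mul_sq_sub_six_mul_add_four (k : ℕ) : k < 36 * k ^ 2 - 6 * k + 4 := by
  have hle : k ≤ k ^ 2 := Nat.le_self_pow two_ne_zero k
  omega

/-- There are infinitely many positive integers `n` such that: (i) `n = a² − a + b²` for
some positive integers `a`, `b`; (ii) `n` is not of the form `m² − m` for an integer `m`;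
(iii) `n` is not a perfect power `m^j` with `j ≥ 2`. In fact, `n = 36k² − 6k + 4`
satisfies all three properties for every odd positive integer `k`. -/
theorem infinitely_many_order_two_twist_knot_parameters :
    {n : ℕ | 0 < n ∧
        (∃ a b : ℕ, 0 < a ∧ 0 < b ∧ n = a ^ 2 - a + b ^ 2) ∧
        (∀ m : ℤ, (n : ℤ) ≠ m ^ 2 - m) ∧
        (∀ m j : ℕ, 2 ≤ j → n ≠ m ^ j)}.Infinite ∧
      ∀ k : ℕ, Odd k → 0 < k →
        (0 < 36 * k ^ 2 - 6 * k + 4 ∧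
          (∃ a b : ℕ, 0 < a ∧ 0 < b ∧ 36 * k ^ 2 - 6 * k + 4 = a ^ 2 - a + b ^ 2) ∧
          (∀ m : ℤ, ((36 * k ^ 2 - 6 * k + 4 : ℕ) : ℤ) ≠ m ^ 2 - m) ∧
          (∀ m j : ℕ, 2 ≤ j → 36 * k ^ 2 - 6 * k + 4 ≠ m ^ j)) := by
  refine ⟨Set.infinite_of_forall_exists_gt fun N => ?_,
    fun k hk _ => isOrderTwoTwistKnotParameter_of_odd hk⟩
  have hlt : N < 36 * (2 * N + 1) ^ 2 - 6 * (2 * N + 1) + 4 :=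
    lt_trans (by omega) (lt_thirtySix_mul_sq_sub_six_mul_add_four (2 * N + 1))
  exact ⟨_, isOrderTwoTwistKnotParameter_of_odd (odd_two_mul_add_one N), hlt⟩
end
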